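/- Let λ ∈ ℂ and let g₁, g₂ : ℂ → ℂ be entire functions such that g_j''(z) = (z³ + λ)·g_j(z) for all z ∈ ℂ (j = 1,2), and such that g_j(x)·x^{3/4}·e^{(2/5)·x^{5/2}} → 1 as x → +∞ along the positive real axis. Then g₁ = g₂. (The asymptotics uniquely determines the solution.) -/

import Mathlib

open Complex Filter

/-!
Let `W` be the Wronskian of two solutions `g₁`, `g₂` of `g'' = q g`; it is constant. The
asymptotics force both solutions to decay along the positive axis so fast that `g_j'' = q g_j` stays
bounded there. A function that is bounded together with its second derivative has a bounded first
derivative (Landau), so `W → 0` along the axis and hence `W = 0`. Therefore `g₁` and `g₂` are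
proportional, and the common normalisation at infinity makes the factor equal to `1`.
-/

open Asymptotics Topology

section Landau

variable {E : Type*} [NormedAddCommGroup E]

lemma norm_image_sub_sub_smul_deriv_le_of_convex {𝕜 : Type*} [RCLike 𝕜] [NormedSpace 𝕜 E]
    {f f' f'' : 𝕜 → E} {s : Set 𝕜} {x y : 𝕜} {C : ℝ} (hs : Convex ℝ s)
    (hf : ∀ z ∈ s, HasDerivWithinAt f (f' z) s z)
    (hf' : ∀ z ∈ s, HasDerivWithinAt f' (f'' z) s z) (hC : ∀ z ∈ s, ‖f'' z‖ ≤ C)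
    (hx : x ∈ s) (hy : y ∈ s) :
    ‖f y - f x - (y - x) • f' x‖ ≤ C * ‖y - x‖ ^ 2 := by
  have hsub : segment ℝ x y ⊆ s := hs.segment_subset hx hy
  have hC0 : 0 ≤ C := (norm_nonneg _).trans (hC x hx)
  have hf'x : ∀ z ∈ segment ℝ x y, ‖f' z - f' x‖ ≤ C * ‖y - x‖ := fun z hz ↦
    calc ‖f' z - f' x‖ ≤ C * ‖z - x‖ :=
          hs.norm_image_sub_le_of_norm_hasDerivWithin_le hf' hC hx (hsub hz)
      _ ≤ C * ‖y - x‖ := by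
          gcongr
          simpa only [norm_sub_rev] using norm_sub_le_of_mem_segment hz
  have hderiv : ∀ z ∈ segment ℝ x y,
      HasDerivWithinAt (fun w ↦ f w - w • f' x) (f' z - f' x) (segment ℝ x y) z := fun z hz ↦ by
    simpa only [one_smul, id_eq] using
      ((hf z (hsub hz)).mono hsub).fun_sub ((hasDerivWithinAt_id z _).smul_const (f' x))
  calc ‖f y - f x - (y - x) • f' x‖ = ‖f y - y • f' x - (f x - x • f' x)‖ := by
        rw [sub_smul, sub_sub_sub_comm]
    _ ≤ C * ‖y - x‖ * ‖y - x‖ :=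
        (convex_segment x y).norm_image_sub_le_of_norm_hasDerivWithin_le hderiv hf'x
          (left_mem_segment ℝ x y) (right_mem_segment ℝ x y)
    _ = C * ‖y - x‖ ^ 2 := by ring

lemma isBigO_one_deriv_atTop [NormedSpace ℝ E] {f f' f'' : ℝ → E}
    (hf : ∀ᶠ x in atTop, HasDerivAt f (f' x) x) (hf' : ∀ᶠ x in atTop, HasDerivAt f' (f'' x) x)
    (hfO : f =O[atTop] fun _ ↦ (1 : ℝ)) (hf''O : f'' =O[atTop] fun _ ↦ (1 : ℝ)) :
    f' =O[atTop] fun _ ↦ (1 : ℝ) := by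
  obtain ⟨A, hA⟩ := hfO.bound
  obtain ⟨B, hB⟩ := hf''O.bound
  refine .of_bound (A + A + B) ?_
  filter_upwards [eventually_forall_ge_atTop.2 (hf.and (hf'.and (hA.and hB)))] with x hx
  simp only [norm_one, mul_one] at hx ⊢
  have htaylor : ‖f (x + 1) - f x - f' x‖ ≤ B := by
    simpa using norm_image_sub_sub_smul_deriv_le_of_convex (convex_Ici x)
      (fun z hz ↦ (hx z hz).1.hasDerivWithinAt) (fun z hz ↦ (hx z hz).2.1.hasDerivWithinAt)
      (fun z hz ↦ (hx z hz).2.2.2) Set.self_mem_Ici (Set.mem_Ici.2 (lt_add_one x).le)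
  calc ‖f' x‖ = ‖f (x + 1) - f x - (f (x + 1) - f x - f' x)‖ := by rw [sub_sub_cancel]
    _ ≤ ‖f (x + 1)‖ + ‖f x‖ + ‖f (x + 1) - f x - f' x‖ :=
        (norm_sub_le _ _).trans (by gcongr; exact norm_sub_le _ _)
    _ ≤ A + A + B :=
        add_le_add_three (hx _ (lt_add_one x).le).2.2.1 (hx x le_rfl).2.2.1 htaylor

end Landau

section Wronskian

variable {𝕜 : Type*}

/-- The Wronskian `f g' - f' g` of two functions of one variable, which is constant when `f` and `g`
solve the same equation `y'' = q y`. It is built from `deriv`, hence meaningful only where both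
functions are differentiable. -/
noncomputable def wronskian [NontriviallyNormedField 𝕜] (f g : 𝕜 → 𝕜) (z : 𝕜) : 𝕜 :=
  f z * deriv g z - deriv f z * g z

lemma hasDerivAt_wronskian [NontriviallyNormedField 𝕜] {f g : 𝕜 → 𝕜} {f'' g'' z : 𝕜}
    (hf : DifferentiableAt 𝕜 f z) (hg : DifferentiableAt 𝕜 g z)
    (hf' : HasDerivAt (deriv f) f'' z) (hg' : HasDerivAt (deriv g) g'' z) :
    HasDerivAt (wronskian f g) (f z * g'' - f'' * g z) z := by
  refine ((hf.hasDerivAt.mul hg').sub (hf'.mul hg.hasDerivAt)).congr_deriv ?_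
  ring

lemma tendsto_wronskian_zero [NontriviallyNormedField 𝕜] {α : Type*} {l : Filter α} {u : α → 𝕜}
    {f g : 𝕜 → 𝕜} (hf : Tendsto (fun x ↦ f (u x)) l (𝓝 0))
    (hg : Tendsto (fun x ↦ g (u x)) l (𝓝 0))
    (hf' : (fun x ↦ deriv f (u x)) =O[l] fun _ ↦ (1 : ℝ))
    (hg' : (fun x ↦ deriv g (u x)) =O[l] fun _ ↦ (1 : ℝ)) :
    Tendsto (fun x ↦ wronskian f g (u x)) l (𝓝 0) := by
  simpa only [wronskian, sub_zero] using
    (hf.zero_mul_isBoundedUnder_le ((isBigO_one_iff ℝ).1 hg')).sub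
      (isBoundedUnder_le_mul_tendsto_zero ((isBigO_one_iff ℝ).1 hf') hg)

variable [RCLike 𝕜] {f g : 𝕜 → 𝕜}

lemma wronskian_eq_wronskian_of_deriv_deriv_eq {q : 𝕜 → 𝕜}
    (hf : Differentiable 𝕜 f) (hg : Differentiable 𝕜 g)
    (hf' : Differentiable 𝕜 (deriv f)) (hg' : Differentiable 𝕜 (deriv g))
    (hfq : ∀ z, deriv (deriv f) z = q z * f z) (hgq : ∀ z, deriv (deriv g) z = q z * g z)
    (z w : 𝕜) : wronskian f g z = wronskian f g w := by
  have hW : ∀ z, HasDerivAt (wronskian f g) 0 z := fun z ↦ by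
    refine (hasDerivAt_wronskian (hf z) (hg z) (hf' z).hasDerivAt
      (hg' z).hasDerivAt).congr_deriv ?_
    rw [hfq, hgq]
    ring
  exact is_const_of_deriv_eq_zero (fun z ↦ (hW z).differentiableAt) (fun z ↦ (hW z).deriv) z w

lemma eqOn_const_mul_of_wronskian_eq_zero {U : Set 𝕜} {z₀ : 𝕜} (hf : AnalyticOnNhd 𝕜 f U)
    (hg : AnalyticOnNhd 𝕜 g U) (hU : IsPreconnected U) (hz₀ : z₀ ∈ U) (hfz₀ : f z₀ ≠ 0)
    (hW : ∀ᶠ z in 𝓝 z₀, wronskian f g z = 0) :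
    Set.EqOn g (fun z ↦ g z₀ / f z₀ * f z) U := by
  refine hg.eqOn_of_preconnected_of_eventuallyEq (analyticOnNhd_const.mul hf) hU hz₀ ?_
  have hne : ∀ᶠ z in 𝓝 z₀, f z ≠ 0 := (hf z₀ hz₀).continuousAt.eventually_ne hfz₀
  have hquot : ∀ᶠ z in 𝓝 z₀, HasDerivAt (fun w ↦ g w / f w) 0 z := by
    filter_upwards [(hf z₀ hz₀).eventually_analyticAt, (hg z₀ hz₀).eventually_analyticAt, hne, hW]
      with z hfz hgz hz hWz
    refine (hgz.differentiableAt.hasDerivAt.div hfz.differentiableAt.hasDerivAt hz).congr_deriv ?_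
    rw [show deriv g z * f z - g z * deriv f z = wronskian f g z by rw [wronskian]; ring, hWz,
      zero_div]
  obtain ⟨r, hr, hball⟩ := Metric.eventually_nhds_iff_ball.1 (hquot.and hne)
  filter_upwards [Metric.ball_mem_nhds z₀ hr] with z hz
  have hconst : g z / f z = g z₀ / f z₀ :=
    Metric.isOpen_ball.is_const_of_deriv_eq_zero (convex_ball z₀ r).isPreconnected
      (fun w hw ↦ (hball w hw).1.differentiableAt.differentiableWithinAt)
      (fun w hw ↦ (hball w hw).1.deriv) hz (Metric.mem_ball_self hr)
  rw [← hconst, div_mul_cancel₀ _ (hball z hz).2]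

end Wronskian

lemma tendsto_zero_of_tendsto_mul_of_norm_atTop {α 𝕜 : Type*} [NormedField 𝕜]
    {l : Filter α} {f w : α → 𝕜} {c : 𝕜} (h : Tendsto (fun x ↦ f x * w x) l (𝓝 c))
    (hw : Tendsto (fun x ↦ ‖w x‖) l atTop) : Tendsto f l (𝓝 0) := by
  have hw' : Tendsto (fun x ↦ (w x)⁻¹) l (𝓝 0) :=
    tendsto_inv₀_cobounded.comp (tendsto_norm_atTop_iff_cobounded.1 hw)
  have hlim : Tendsto (fun x ↦ f x * w x * (w x)⁻¹) l (𝓝 0) := by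
    simpa only [mul_zero] using h.mul hw'
  refine hlim.congr' ?_
  filter_upwards [hw.eventually_gt_atTop 0] with x hx
  exact mul_inv_cancel_right₀ (norm_pos_iff.1 hx) (f x)

lemma isBigO_one_deriv_of_isBigO_one_mul {q g : ℂ → ℂ} {w : ℝ → ℂ}
    (hg : Differentiable ℂ g) (hgq : ∀ z, deriv (deriv g) z = q z * g z)
    (hq : (fun x : ℝ ↦ q x) =O[atTop] w) (hgO : (fun x : ℝ ↦ g x) =O[atTop] fun _ ↦ (1 : ℝ))
    (hgw : (fun x : ℝ ↦ g x * w x) =O[atTop] fun _ ↦ (1 : ℝ)) :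
    (fun x : ℝ ↦ deriv g x) =O[atTop] fun _ ↦ (1 : ℝ) := by
  have hg'' : (fun x : ℝ ↦ deriv (deriv g) x) =O[atTop] fun _ ↦ (1 : ℝ) := by
    simp only [hgq, mul_comm (q _)]
    exact ((isBigO_refl _ _).mul hq).trans hgw
  exact isBigO_one_deriv_atTop (.of_forall fun x ↦ (hg x).hasDerivAt.comp_ofReal)
    (.of_forall fun x ↦ (hg.deriv x).hasDerivAt.comp_ofReal) hgO hg''

lemma isLittleO_rpow_rpow_mul_exp_rpow (s a : ℝ) {b p : ℝ} (hb : 0 < b) (hp : 0 < p) :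
    (fun x : ℝ ↦ x ^ s) =o[atTop] fun x ↦ x ^ a * Real.exp (b * x ^ p) := by
  have hexp : (fun x : ℝ ↦ (x ^ p) ^ ((s - a) / p)) =o[atTop] fun x ↦ Real.exp (b * x ^ p) :=
    (isLittleO_rpow_exp_pos_mul_atTop _ hb).comp_tendsto (tendsto_rpow_atTop hp)
  refine ((isBigO_refl (fun x : ℝ ↦ x ^ a) atTop).mul_isLittleO hexp).congr' ?_ .rfl
  filter_upwards [eventually_gt_atTop 0] with x hx
  rw [← Real.rpow_mul hx.le, mul_div_cancel₀ _ hp.ne', ← Real.rpow_add hx, add_sub_cancel]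

lemma isLittleO_pow_rpow_mul_cexp_rpow (n : ℕ) (a : ℝ) {b : ℂ} {p : ℝ} (hb : 0 < b.re)
    (hp : 0 < p) :
    (fun x : ℝ ↦ (x : ℂ) ^ n) =o[atTop]
      fun x ↦ ((x ^ a : ℝ) : ℂ) * Complex.exp (b * ((x ^ p : ℝ) : ℂ)) := by
  refine ((isLittleO_rpow_rpow_mul_exp_rpow n a hb hp).norm_norm.congr (fun x ↦ ?_)
    fun x ↦ ?_).of_norm_norm
  · rw [Real.rpow_natCast, norm_pow, norm_pow, Complex.norm_real]
  · rw [norm_mul, norm_mul, Complex.norm_real, Complex.norm_exp, Complex.re_mul_ofReal,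
      Real.norm_of_nonneg (Real.exp_nonneg _)]

theorem asymptotics_determines_solution_general {q g₁ g₂ : ℂ → ℂ} {w : ℝ → ℂ} {c : ℂ} (hc : c ≠ 0)
    (hw : Tendsto (fun x ↦ ‖w x‖) atTop atTop) (hq : (fun x : ℝ ↦ q x) =O[atTop] w)
    (h₁diff : Differentiable ℂ g₁) (h₂diff : Differentiable ℂ g₂)
    (h₁eq : ∀ z, deriv (deriv g₁) z = q z * g₁ z) (h₂eq : ∀ z, deriv (deriv g₂) z = q z * g₂ z)
    (h₁asym : Tendsto (fun x : ℝ ↦ g₁ x * w x) atTop (𝓝 c))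
    (h₂asym : Tendsto (fun x : ℝ ↦ g₂ x * w x) atTop (𝓝 c)) :
    g₁ = g₂ := by
  have h₁zero := tendsto_zero_of_tendsto_mul_of_norm_atTop h₁asym hw
  have h₂zero := tendsto_zero_of_tendsto_mul_of_norm_atTop h₂asym hw
  have hWlim : Tendsto (fun x : ℝ ↦ wronskian g₁ g₂ x) atTop (𝓝 0) :=
    tendsto_wronskian_zero h₁zero h₂zero
      (isBigO_one_deriv_of_isBigO_one_mul h₁diff h₁eq hq (h₁zero.isBigO_one ℝ)
        (h₁asym.isBigO_one ℝ))
      (isBigO_one_deriv_of_isBigO_one_mul h₂diff h₂eq hq (h₂zero.isBigO_one ℝ)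
        (h₂asym.isBigO_one ℝ))
  have hW : ∀ z, wronskian g₁ g₂ z = 0 := fun z ↦
    tendsto_nhds_unique (tendsto_const_nhds.congr fun x : ℝ ↦
      wronskian_eq_wronskian_of_deriv_deriv_eq h₁diff h₂diff h₁diff.deriv h₂diff.deriv h₁eq h₂eq
        z x) hWlim
  obtain ⟨x₀, hx₀⟩ := (h₁asym.eventually_ne hc).exists
  set k := g₂ x₀ / g₁ x₀
  have hprop : ∀ z, g₂ z = k * g₁ z := fun z ↦
    eqOn_const_mul_of_wronskian_eq_zero (fun z _ ↦ h₁diff.analyticAt z)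
      (fun z _ ↦ h₂diff.analyticAt z) isPreconnected_univ (Set.mem_univ _)
      (left_ne_zero_of_mul hx₀) (.of_forall hW) (Set.mem_univ z)
  have hkc : k * c = c :=
    tendsto_nhds_unique ((h₁asym.const_mul k).congr fun x ↦ by rw [hprop, mul_assoc]) h₂asym
  funext z
  rw [hprop, (mul_eq_right₀ hc).1 hkc, one_mul]

/-- An entire solution of `g'' = (z³ + λ) g` with the asymptotics
`g(x) x^{3/4} e^{(2/5) x^{5/2}} → 1` as `x → +∞` is unique. -/
theorem asymptotics_determines_solution (lam : ℂ) (g₁ g₂ : ℂ → ℂ)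
    (h₁diff : Differentiable ℂ g₁) (h₂diff : Differentiable ℂ g₂)
    (h₁eq : ∀ z : ℂ, deriv (deriv g₁) z = (z ^ 3 + lam) * g₁ z)
    (h₂eq : ∀ z : ℂ, deriv (deriv g₂) z = (z ^ 3 + lam) * g₂ z)
    (h₁asym : Tendsto (fun x : ℝ =>
        g₁ (x : ℂ) * ((x ^ ((3 : ℝ) / 4) : ℝ) : ℂ) *
          Complex.exp ((2 / 5 : ℂ) * ((x ^ ((5 : ℝ) / 2) : ℝ) : ℂ)))
      atTop (nhds 1))
    (h₂asym : Tendsto (fun x : ℝ =>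
        g₂ (x : ℂ) * ((x ^ ((3 : ℝ) / 4) : ℝ) : ℂ) *
          Complex.exp ((2 / 5 : ℂ) * ((x ^ ((5 : ℝ) / 2) : ℝ) : ℂ)))
      atTop (nhds 1)) :
    g₁ = g₂ := by
  have hpow (n : ℕ) := isLittleO_pow_rpow_mul_cexp_rpow n (3 / 4) (b := 2 / 5) (p := 5 / 2)
    (by norm_num) (by norm_num)
  refine asymptotics_determines_solution_general one_ne_zero
    ((isLittleO_one_left_iff ℂ).1 (by simpa only [pow_zero] using hpow 0))
    ((hpow 3).add (by simpa only [pow_zero, mul_one] using (hpow 0).const_mul_left lam)).isBigO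
    h₁diff h₂diff h₁eq h₂eq ?_ ?_
  · simpa only [mul_assoc] using h₁asym
  · simpa only [mul_assoc] using h₂asym
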